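/- Let (X*,y*) be a saddle point of min_{X∈S_n} max_{y∈K} f(X,y), let r̃ be the multiplicity of λ_n(∇_X f(X*,y*)), and for 1 ≤ j ≤ n−1 set δ(j) = λ_{n−j}(∇_X f(X*,y*)) − λ_n(∇_X f(X*,y*)). Let β > 0 be such that (X,y) ↦ (∇_X f(X,y), −∇_y f(X,y)) is β-Lipschitz on S_n × K in the product norm, and let η ≥ 0 with ηβ < 1. Then for any r with r̃ ≤ r ≤ n−1 and any (X,y) ∈ S_n × K satisfying ‖(X,y) − (X*,y*)‖ ≤ [ η / ( 1 + √2·η·max{β_X, β_Xy}·(1 + 1/√(1 − η²β²)) ) ] · max{ √r̃·δ(r−r̃+1)/2, δ(r)/(1 + 1/√r̃) } (with δ(r−r̃+1) interpreted only when r ≥ 2r̃−1, else that term is omitted), it holds that rank( Π_{S_n}[ X − η∇_X f(X,y) ] ) ≤ r and rank( Π_{S_n}[ X − η∇_X f(Z₊,w₊) ] ) ≤ r, where Z₊ = Π_{S_n}[X − η∇_X f(X,y)] and w₊ = Π_K[y + η∇_y f(X,y)]. -/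

import Mathlib

open scoped BigOperators RealInnerProductSpace
open Matrix

noncomputable section

abbrev Mat (n : ℕ) := Matrix (Fin n) (Fin n) ℝ
abbrev Vec (m : ℕ) := EuclideanSpace ℝ (Fin m)

/-- Trace inner product `⟨A,B⟩ = Tr(AB)`. -/
def mip {n : ℕ} (A B : Mat n) : ℝ := (A * B).trace

/-- Frobenius norm. -/
def frob {n : ℕ} (A : Mat n) : ℝ := Real.sqrt (∑ i, ∑ j, (A i j) ^ 2)

/-- The set of symmetric `n × n` real matrices (the space `𝕊ⁿ`). -/
def SymM (n : ℕ) : Set (Mat n) := {X | X.IsSymm}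

/-- The spectrahedron `S_n`. -/
def Spectra (n : ℕ) : Set (Mat n) := {X | X.trace = 1 ∧ X.PosSemidef}

/-- `lam A k` : the `k`-th largest eigenvalue of a symmetric matrix `A` (1-indexed,
so `lam A 1 = λ₁(A)` is the largest and `lam A n = λₙ(A)` is the smallest);
junk value otherwise. -/
def lam {n : ℕ} (A : Mat n) (k : ℕ) : ℝ :=
  if h : k - 1 < n then
    if hA : A.IsHermitian then
      hA.eigenvalues (Tuple.sort hA.eigenvalues (Fin.rev ⟨k - 1, h⟩))
    else 0
  else 0

/-- Multiplicity of the smallest eigenvalue of `A`. -/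
def multMin {n : ℕ} (A : Mat n) : ℕ :=
  letI := Classical.decPred fun k : ℕ => lam A k = lam A n
  ((Finset.Icc 1 n).filter fun k => lam A k = lam A n).card

/-- Subdifferential of `g : 𝕊ⁿ → ℝ` at `X`. -/
def subdiff {n : ℕ} (g : Mat n → ℝ) (X : Mat n) : Set (Mat n) :=
  {G | G.IsSymm ∧ ∀ Y ∈ SymM n, g Y ≥ g X + mip G (Y - X)}

/-- Euclidean (Frobenius-norm) projection onto `C ⊆ 𝕊ⁿ`. -/
def mproj {n : ℕ} (C : Set (Mat n)) (X : Mat n) : Mat n :=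
  Classical.epsilon fun P => P ∈ C ∧ ∀ Q ∈ C, frob (X - P) ≤ frob (X - Q)

/-- Euclidean projection onto `C ⊆ ℝᵐ`. -/
def vproj {m : ℕ} (C : Set (Vec m)) (x : Vec m) : Vec m :=
  Classical.epsilon fun p => p ∈ C ∧ ∀ q ∈ C, ‖x - p‖ ≤ ‖x - q‖

/-- Norm on the product space `𝕊ⁿ × ℝᵐ`. -/
def pnorm {n m : ℕ} (X : Mat n) (y : Vec m) : ℝ := Real.sqrt (frob X ^ 2 + ‖y‖ ^ 2)

/-- The operator of a matrix on Euclidean space. -/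
def opT {n : ℕ} (A : Mat n) : Vec n →ₗ[ℝ] Vec n := Matrix.toEuclideanLin A

/-- The quadratic form of a matrix. -/
def qf {n : ℕ} (A : Mat n) (v : Vec n) : ℝ := ⟪v, opT A v⟫

lemma opT_sub {n : ℕ} (A B : Mat n) (v : Vec n) : opT (A - B) v = opT A v - opT B v := by
  simp [opT]

lemma opT_add {n : ℕ} (A B : Mat n) (v : Vec n) : opT (A + B) v = opT A v + opT B v := by
  simp [opT]

lemma opT_smul {n : ℕ} (c : ℝ) (A : Mat n) (v : Vec n) : opT (c • A) v = c • opT A v := by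
  simp [opT]

lemma qf_sub {n : ℕ} (A B : Mat n) (v : Vec n) : qf (A - B) v = qf A v - qf B v := by
  simp [qf, opT_sub, inner_sub_right]

lemma qf_add {n : ℕ} (A B : Mat n) (v : Vec n) : qf (A + B) v = qf A v + qf B v := by
  simp [qf, opT_add, inner_add_right]

lemma qf_smul {n : ℕ} (c : ℝ) (A : Mat n) (v : Vec n) : qf (c • A) v = c * qf A v := by
  simp [qf, opT_smul, inner_smul_right]

lemma isHerm_of_symm {n : ℕ} {A : Mat n} (h : A.IsSymm) : A.IsHermitian := by
  rw [Matrix.IsHermitian, Matrix.conjTranspose_eq_transpose_of_trivial]; exact h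

lemma symm_of_isHerm {n : ℕ} {A : Mat n} (h : A.IsHermitian) : A.IsSymm := by
  rw [Matrix.IsHermitian, Matrix.conjTranspose_eq_transpose_of_trivial] at h; exact h

lemma opT_symm {n : ℕ} {A : Mat n} (h : A.IsSymm) (u v : Vec n) :
    ⟪opT A u, v⟫ = ⟪u, opT A v⟫ :=
  (Matrix.isSymmetric_toEuclideanLin_iff.2 (isHerm_of_symm h)) u v

lemma opT_ofLp {n : ℕ} (A : Mat n) (v : Vec n) : (opT A v).ofLp = A *ᵥ v.ofLp := by
  simp [opT]

lemma qf_dot {n : ℕ} (A : Mat n) (v : Vec n) : qf A v = v.ofLp ⬝ᵥ (A *ᵥ v.ofLp) := by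
  rw [qf, EuclideanSpace.inner_eq_star_dotProduct, opT_ofLp, dotProduct_comm]; simp

lemma qf_nonneg {n : ℕ} {A : Mat n} (h : A.PosSemidef) (v : Vec n) : 0 ≤ qf A v := by
  rw [qf_dot]; simpa using h.dotProduct_mulVec_nonneg v.ofLp

lemma trace_basis {n : ℕ} (A : Mat n) (b : OrthonormalBasis (Fin n) ℝ (Vec n)) :
    A.trace = ∑ i, qf A (b i) := by
  have e : opT A = Matrix.toLin (PiLp.basisFun 2 ℝ (Fin n)) (PiLp.basisFun 2 ℝ (Fin n)) A := by
    rw [← Matrix.toLpLin_eq_toLin]; rfl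
  have h0 : LinearMap.trace ℝ (Vec n) (opT A) = A.trace := by rw [e, Matrix.trace_toLin_eq]
  rw [← h0, LinearMap.trace_eq_sum_inner _ b]; rfl

lemma mip_basis {n : ℕ} (A B : Mat n) (b : OrthonormalBasis (Fin n) ℝ (Vec n)) (μ : Fin n → ℝ)
    (hb : ∀ i, opT B (b i) = μ i • b i) : mip A B = ∑ i, μ i * qf A (b i) := by
  rw [mip, trace_basis _ b]
  refine Finset.sum_congr rfl fun i _ => ?_
  have : opT (A * B) (b i) = opT A (opT B (b i)) := by
    simp [opT]
  rw [qf, this, hb, map_smul, inner_smul_right, qf]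

lemma mip_comm {n : ℕ} (A B : Mat n) : mip A B = mip B A := Matrix.trace_mul_comm _ _

lemma mip_sub {n : ℕ} (A B C : Mat n) : mip A (B - C) = mip A B - mip A C := by
  simp [mip, mul_sub]

lemma mip_smul {n : ℕ} (c : ℝ) (A B : Mat n) : mip A (c • B) = c * mip A B := by
  simp [mip]

lemma mip_rank1 {n : ℕ} (A : Mat n) (v : Vec n) :
    mip A (Matrix.vecMulVec v.ofLp v.ofLp) = qf A v := by
  rw [mip, qf_dot, Matrix.mul_vecMulVec, Matrix.trace_vecMulVec, dotProduct_comm]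

lemma rank1_mem {n : ℕ} (v : Vec n) (hv : ‖v‖ = 1) :
    Matrix.vecMulVec v.ofLp v.ofLp ∈ Spectra n := by
  constructor
  · rw [Matrix.trace_vecMulVec]
    have : ⟪v, v⟫ = 1 := by rw [real_inner_self_eq_norm_sq, hv]; norm_num
    rw [EuclideanSpace.inner_eq_star_dotProduct] at this
    simpa using this
  · simpa using Matrix.posSemidef_vecMulVec_self_star v.ofLp

/-- Vectorization. -/
def vc {n : ℕ} : Mat n →ₗ[ℝ] EuclideanSpace ℝ (Fin n × Fin n) where
  toFun A := WithLp.toLp 2 (fun p => A p.1 p.2)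
  map_add' A B := by ext; simp
  map_smul' c A := by ext; simp

lemma vc_norm {n : ℕ} (A : Mat n) : ‖vc A‖ = frob A := by
  rw [EuclideanSpace.norm_eq, frob]
  simp [vc, Fintype.sum_prod_type]

lemma vc_inner {n : ℕ} (A B : Mat n) (hB : B.IsSymm) : ⟪vc A, vc B⟫ = mip A B := by
  simp only [vc, PiLp.inner_apply, mip, Matrix.trace, Matrix.mul_apply, Fintype.sum_prod_type,
    Matrix.diag_apply, LinearMap.coe_mk, AddHom.coe_mk]
  refine Finset.sum_congr rfl fun i _ => Finset.sum_congr rfl fun j _ => ?_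
  rw [hB.apply i j]; simp [mul_comm]

lemma frob_nonneg {n : ℕ} (A : Mat n) : 0 ≤ frob A := Real.sqrt_nonneg _

lemma spectra_convex (n : ℕ) : Convex ℝ (Spectra n) := by
  intro A hA B hB a c ha hc hac
  refine ⟨?_, (hA.2.smul ha).add (hB.2.smul hc)⟩
  simp [hA.1, hB.1, hac]

lemma vc_injective {n : ℕ} : Function.Injective (vc (n := n)) := by
  intro A B h
  ext i j
  have := congrArg (fun v => v.ofLp (i, j)) h
  simpa [vc] using this

lemma spectra_closed (n : ℕ) : IsClosed (Spectra n) := by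
  have : Spectra n = {A : Mat n | A.trace = 1} ∩ ({A : Mat n | Aᵀ = A} ∩
      ⋂ v : Fin n → ℝ, {A : Mat n | 0 ≤ v ⬝ᵥ (A *ᵥ v)}) := by
    ext A
    simp only [Spectra, Set.mem_ofPred_eq, Set.mem_inter_iff, Set.mem_iInter]
    refine and_congr_right fun _ => ⟨fun h => ⟨symm_of_isHerm h.1, fun v => by
      simpa using h.dotProduct_mulVec_nonneg v⟩, fun h => ?_⟩
    exact Matrix.PosSemidef.of_dotProduct_mulVec_nonneg (isHerm_of_symm h.1)
      (fun v => by simpa using h.2 v)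
  rw [this]
  refine IsClosed.inter ?_ (IsClosed.inter ?_ (isClosed_iInter fun v => ?_))
  · exact isClosed_eq (by fun_prop) continuous_const
  · exact isClosed_eq (by fun_prop) continuous_id
  · exact isClosed_le continuous_const (by fun_prop)

lemma proj_gen {H : Type*} [NormedAddCommGroup H] [InnerProductSpace ℝ H] {C : Set H}
    (hne : C.Nonempty) (hc : IsComplete C) (hcv : Convex ℝ C) (x : H) :
    (∃ p, p ∈ C ∧ ∀ q ∈ C, ‖x - p‖ ≤ ‖x - q‖) ∧
    ∀ p, (p ∈ C ∧ ∀ q ∈ C, ‖x - p‖ ≤ ‖x - q‖) → ∀ q ∈ C, ⟪x - p, q - p⟫ ≤ 0 := by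
  have hb : BddBelow (Set.range fun w : C => ‖x - w‖) := ⟨0, by rintro _ ⟨w, rfl⟩; positivity⟩
  constructor
  · obtain ⟨p, hp, h⟩ := exists_norm_eq_iInf_of_complete_convex hne hc hcv x
    exact ⟨p, hp, fun q hq => h ▸ ciInf_le hb ⟨q, hq⟩⟩
  · rintro p ⟨hp, h⟩
    refine (norm_eq_iInf_iff_real_inner_le_zero hcv hp).1 ?_
    have : Nonempty C := hne.to_subtype
    exact le_antisymm (le_ciInf fun w => h w w.2) (ciInf_le hb ⟨p, hp⟩)

lemma vproj_spec {m : ℕ} {K : Set (Vec m)} (hne : K.Nonempty) (hc : IsCompact K)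
    (hcv : Convex ℝ K) (x : Vec m) :
    vproj K x ∈ K ∧ ∀ q ∈ K, ⟪x - vproj K x, q - vproj K x⟫ ≤ 0 := by
  obtain ⟨h1, h2⟩ := proj_gen hne hc.isComplete hcv x
  have h3 := Classical.epsilon_spec h1
  exact ⟨h3.1, h2 _ h3⟩

lemma spectra_nonempty {n : ℕ} (hn : 0 < n) : (Spectra n).Nonempty :=
  ⟨_, rank1_mem (EuclideanSpace.single ⟨0, hn⟩ 1) (by simp)⟩

lemma mproj_spec {n : ℕ} (hn : 0 < n) (P : Mat n) :
    mproj (Spectra n) P ∈ Spectra n ∧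
    ∀ Q ∈ Spectra n, mip (P - mproj (Spectra n) P) (Q - mproj (Spectra n) P) ≤ 0 := by
  have hcl : IsClosed (vc '' Spectra n) := by
    have := (LinearMap.isClosedEmbedding_of_injective (f := vc (n := n))
      (LinearMap.ker_eq_bot.2 vc_injective))
    exact this.isClosedMap _ (spectra_closed n)
  obtain ⟨h1, h2⟩ := proj_gen ((spectra_nonempty hn).image vc) hcl.isComplete
    ((spectra_convex n).linear_image vc) (vc P)
  have h1' : ∃ Z, Z ∈ Spectra n ∧ ∀ Q ∈ Spectra n, frob (P - Z) ≤ frob (P - Q) := by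
    obtain ⟨_, ⟨Z, hZ, rfl⟩, h⟩ := h1
    refine ⟨Z, hZ, fun Q hQ => ?_⟩
    have := h _ ⟨Q, hQ, rfl⟩
    rwa [← map_sub, ← map_sub, vc_norm, vc_norm] at this
  have h3 : mproj (Spectra n) P ∈ Spectra n ∧ ∀ Q ∈ Spectra n,
    frob (P - mproj (Spectra n) P) ≤ frob (P - Q) := Classical.epsilon_spec h1'
  refine ⟨h3.1, fun Q hQ => ?_⟩
  have := h2 (vc (mproj (Spectra n) P)) ⟨⟨_, h3.1, rfl⟩, ?_⟩ (vc Q) ⟨_, hQ, rfl⟩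
  · rwa [← map_sub, ← map_sub, vc_inner] at this
    exact (symm_of_isHerm hQ.2.1).sub (symm_of_isHerm h3.1.2.1)
  · rintro _ ⟨Q, hQ, rfl⟩
    rw [← map_sub, ← map_sub, vc_norm, vc_norm]
    exact h3.2 Q hQ

/-- Sum of quadratic forms over an orthonormal family against the Frobenius norm. -/
lemma qf_sum_le {n : ℕ} (E : Mat n) {ι : Type*} [Fintype ι] (u : ι → Vec n)
    (hu : Orthonormal ℝ u) :
    |∑ i, qf E (u i)| ≤ Real.sqrt (Fintype.card ι) * frob E := by
  have h1 : |∑ i, qf E (u i)| ≤ ∑ i, ‖opT E (u i)‖ := by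
    refine (Finset.abs_sum_le_sum_abs _ _).trans (Finset.sum_le_sum fun i _ => ?_)
    have := abs_real_inner_le_norm (u i) (opT E (u i))
    rwa [hu.1 i, one_mul] at this
  have h2 : ∑ i, ‖opT E (u i)‖ ^ 2 ≤ ∑ i, ∑ j, (E i j) ^ 2 := by
    have : ∀ i, ‖opT E (u i)‖ ^ 2 = ∑ a, ‖⟪u i, (WithLp.toLp 2 (E a) : Vec n)⟫‖ ^ 2 := by
      intro i
      rw [EuclideanSpace.norm_sq_eq]
      refine Finset.sum_congr rfl fun a _ => ?_
      rw [opT_ofLp, EuclideanSpace.inner_eq_star_dotProduct]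
      simp [Matrix.mulVec]
    simp_rw [this]
    rw [Finset.sum_comm]
    refine Finset.sum_le_sum fun a _ => ?_
    refine (hu.sum_inner_products_le _).trans ?_
    rw [EuclideanSpace.norm_sq_eq]; simp
  have h3 : (∑ i, ‖opT E (u i)‖) ^ 2 ≤ Fintype.card ι * ∑ i, ‖opT E (u i)‖ ^ 2 := by
    simpa using sq_sum_le_card_mul_sum_sq (s := Finset.univ) (f := fun i => ‖opT E (u i)‖)
  refine h1.trans ?_
  rw [frob, ← Real.sqrt_mul (by positivity)]
  apply Real.le_sqrt_of_sq_le
  exact h3.trans (by gcongr)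

lemma qf_eig {n : ℕ} {A : Mat n} (hA : A.IsSymm) (b : OrthonormalBasis (Fin n) ℝ (Vec n))
    (μ : Fin n → ℝ) (hb : ∀ i, opT A (b i) = μ i • b i) (v : Vec n) :
    qf A v = ∑ i, μ i * ⟪b i, v⟫ ^ 2 := by
  rw [qf, ← b.sum_inner_mul_inner]
  refine Finset.sum_congr rfl fun i _ => ?_
  rw [← opT_symm hA, hb, real_inner_smul_left, real_inner_comm]; ring

/-- A PSD quadratic form vanishing at `v` annihilates `v`. -/
lemma psd_zero {n : ℕ} {A : Mat n} (hA : A.IsSymm) (hq : ∀ v, 0 ≤ qf A v) (v : Vec n)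
    (hv : qf A v = 0) : opT A v = 0 := by
  have hpsd : A.PosSemidef := Matrix.PosSemidef.of_dotProduct_mulVec_nonneg (isHerm_of_symm hA)
    (fun x => by simpa [qf_dot] using hq (WithLp.toLp 2 x))
  have := (hpsd.dotProduct_mulVec_zero_iff v.ofLp).1 (by rw [qf_dot] at hv; simpa using hv)
  have h2 := opT_ofLp A v
  rw [this] at h2
  ext i; simp [h2]

lemma exists_orthonormal {n : ℕ} (F : Finset (Vec n)) (s : ℕ) (h : F.card + s ≤ n) :
    ∃ u : Fin s → Vec n, Orthonormal ℝ u ∧ ∀ i, ∀ x ∈ F, ⟪x, u i⟫ = 0 := by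
  set S := Submodule.span ℝ (F : Set (Vec n))
  have h1 := S.finrank_add_finrank_orthogonal
  have h2 : Module.finrank ℝ S ≤ F.card := finrank_span_finset_le_card F
  rw [finrank_euclideanSpace_fin] at h1
  have h3 : s ≤ Module.finrank ℝ Sᗮ := by omega
  let B := stdOrthonormalBasis ℝ Sᗮ
  refine ⟨fun i => (B (Fin.castLE h3 i) : Vec n), ?_, ?_⟩
  · have := B.orthonormal.comp (Fin.castLE h3) (Fin.castLE_injective h3)
    exact this.comp_linearIsometry Sᗮ.subtypeₗᵢ
  · intro i x hx
    exact (Submodule.mem_orthogonal _ _).1 (B (Fin.castLE h3 i)).2 x (Submodule.subset_span hx)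

/-- Structure of the projection onto the spectrahedron. -/
lemma proj_struct {n : ℕ} (hn : 0 < n) (P : Mat n) (hP : P.IsSymm) :
    ∃ σ : ℝ, (∀ v : Vec n, ‖v‖ = 1 → qf P v ≤ qf (mproj (Spectra n) P) v + σ) ∧
    ∃ F : Finset (Vec n), F.card + (mproj (Spectra n) P).rank ≤ n ∧
      ∀ v : Vec n, ‖v‖ = 1 → (∀ x ∈ F, ⟪x, v⟫ = 0) → σ < qf P v := by
  classical
  obtain ⟨hZ, hopt⟩ := mproj_spec hn P
  set Z := mproj (Spectra n) P with hZdef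
  have hZs : Z.IsSymm := symm_of_isHerm hZ.2.1
  set σ := mip (P - Z) Z with hσ
  have hup : ∀ v : Vec n, ‖v‖ = 1 → qf (P - Z) v ≤ σ := by
    intro v hv
    have := hopt _ (rank1_mem v hv)
    rw [mip_sub, mip_rank1] at this
    linarith
  have hZh : Z.IsHermitian := hZ.2.1
  let b := hZh.eigenvectorBasis
  let ζ := hZh.eigenvalues
  have hb : ∀ i, opT Z (b i) = ζ i • b i := by
    intro i
    have h := hZh.mulVec_eigenvectorBasis i
    ext j
    rw [opT_ofLp, h]; simp [b, ζ]
  have hζ : ∀ i, 0 ≤ ζ i := fun i => hZ.2.eigenvalues_nonneg i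
  have hbn : ∀ i, ‖b i‖ = 1 := fun i => b.orthonormal.1 i
  have hsum : ∑ i, ζ i = 1 := by
    rw [← hZ.1, trace_basis Z b]
    refine Finset.sum_congr rfl fun i _ => ?_
    rw [qf, hb, inner_smul_right, real_inner_self_eq_norm_sq, hbn]; simp
  have hσ2 : ∑ i, ζ i * (σ - qf (P - Z) (b i)) = 0 := by
    have h := mip_basis (P - Z) Z b ζ hb
    simp_rw [mul_sub, Finset.sum_sub_distrib]
    rw [← h, ← Finset.sum_mul, hsum]; ring
  have hterm : ∀ i, ζ i * (σ - qf (P - Z) (b i)) = 0 := by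
    intro i
    exact (Finset.sum_eq_zero_iff_of_nonneg (fun i _ =>
      mul_nonneg (hζ i) (sub_nonneg.2 (hup _ (hbn i))))).1 hσ2 i (Finset.mem_univ i)
  -- the complementary operator
  have hN : ∀ v : Vec n, 0 ≤ qf (σ • (1 : Mat n) - (P - Z)) v := by
    intro v
    by_cases hv : v = 0
    · simp [hv, qf]
    have hv' : ‖v‖ ≠ 0 := by simpa using hv
    have h1 := hup (‖v‖⁻¹ • v) (by rw [norm_smul]; simp [hv'])
    have h2 : qf (P - Z) (‖v‖⁻¹ • v) = (‖v‖⁻¹) ^ 2 * qf (P - Z) v := by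
      simp only [qf, map_smul, inner_smul_right, real_inner_smul_left]; ring
    have h3 : qf (1 : Mat n) v = ‖v‖ ^ 2 := by
      rw [← real_inner_self_eq_norm_sq, qf]; congr 1; ext j; rw [opT_ofLp]; simp
    rw [qf_sub, qf_smul, h3]
    rw [h2] at h1
    have h4 : ‖v‖ ^ 2 * ((‖v‖⁻¹) ^ 2 * qf (P - Z) v) ≤ ‖v‖ ^ 2 * σ :=
      mul_le_mul_of_nonneg_left h1 (by positivity)
    have h5 : ‖v‖ ^ 2 * ((‖v‖⁻¹) ^ 2 * qf (P - Z) v) = qf (P - Z) v := by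
      field_simp
    linarith
  have hNs : (σ • (1 : Mat n) - (P - Z)).IsSymm :=
    (Matrix.isSymm_one.smul σ).sub (hP.sub hZs)
  have hqone : ∀ v : Vec n, opT (1 : Mat n) v = v := by
    intro v; ext j; rw [opT_ofLp]; simp
  have heig : ∀ i, ζ i ≠ 0 → opT (P - Z) (b i) = σ • b i := by
    intro i hi
    have h1 : qf (P - Z) (b i) = σ := by
      rcases mul_eq_zero.1 (hterm i) with h | h
      · exact absurd h hi
      · linarith
    have h2 := psd_zero hNs hN (b i) (by
      rw [qf_sub, qf_smul, h1, qf, hqone, real_inner_self_eq_norm_sq, hbn]; simp)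
    rw [opT_sub, opT_smul, hqone, sub_eq_zero] at h2
    exact h2.symm
  refine ⟨σ, fun v hv => ?_, (Finset.univ.filter fun i => ζ i = 0).image b, ?_, ?_⟩
  · have := hup v hv
    rw [qf_sub] at this; linarith
  · have h1 := hZh.rank_eq_card_non_zero_eigs
    rw [h1, Fintype.card_subtype]
    have h2 := Finset.card_filter_add_card_filter_not (s := (Finset.univ : Finset (Fin n)))
      (fun i => ζ i = 0)
    have h3 : ((Finset.univ.filter fun i => ζ i = 0).image b).card ≤ _ := Finset.card_image_le
    simp only [Finset.card_univ, Fintype.card_fin] at h2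
    simp only [ne_eq]
    change _ + (Finset.univ.filter fun i => ¬ ζ i = 0).card ≤ n
    omega
  · intro v hv hF
    have hF' : ∀ i, ζ i = 0 → ⟪b i, v⟫ = 0 := fun i hi =>
      hF _ (Finset.mem_image_of_mem _ (by simp [hi]))
    have h1 : qf (P - Z) v = σ := by
      have : ∀ i, ⟪v, b i⟫ * ⟪b i, opT (P - Z) v⟫ = σ * ‖⟪b i, v⟫‖ ^ 2 := by
        intro i
        by_cases hi : ζ i = 0
        · rw [real_inner_comm, hF' i hi]; simp
        · rw [← opT_symm (hP.sub hZs), heig i hi, real_inner_smul_left, real_inner_comm,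
            Real.norm_eq_abs, sq_abs]; ring
      rw [qf, ← b.sum_inner_mul_inner, Finset.sum_congr rfl (fun i _ => this i),
        ← Finset.mul_sum, b.sum_sq_norm_inner_right, hv]; simp
    have h2 : 0 < qf Z v := by
      rw [qf_eig hZs b ζ hb]
      have hnn : ∀ i ∈ Finset.univ, 0 ≤ ζ i * ⟪b i, v⟫ ^ 2 := fun i _ =>
        mul_nonneg (hζ i) (sq_nonneg _)
      rcases (Finset.sum_nonneg hnn).lt_or_eq with h | h
      · exact h
      · exfalso
        have hz := (Finset.sum_eq_zero_iff_of_nonneg hnn).1 h.symm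
        have h0 : ∀ i, ⟪b i, v⟫ = 0 := by
          intro i
          rcases mul_eq_zero.1 (hz i (Finset.mem_univ i)) with h | h
          · exact hF' i h
          · exact pow_eq_zero_iff (two_ne_zero) |>.1 h
        have := b.sum_sq_norm_inner_right v
        simp [h0, hv] at this
    rw [qf_sub] at h1
    linarith

lemma core {n : ℕ} (hn : 0 < n) (b : OrthonormalBasis (Fin n) ℝ (Vec n)) (μ : Fin n → ℝ)
    (hμ : Monotone μ) (G : Mat n) (hG : G.IsSymm) (hb : ∀ i, opT G (b i) = μ i • b i)
    (rt : ℕ) (hrt1 : 1 ≤ rt) (hμrt : ∀ i : Fin n, (i : ℕ) < rt ↔ μ i = μ ⟨0, hn⟩)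
    (Xs : Mat n) (hXs : Xs ∈ Spectra n) (hopt : ∀ Q ∈ Spectra n, 0 ≤ mip G (Q - Xs))
    (η : ℝ) (hη : 0 ≤ η) (P : Mat n) (hP : P.IsSymm) (e : ℝ)
    (he : frob (P - (Xs - η • G)) ≤ e) (r k : ℕ) (hk1 : rt ≤ k) (hk2 : k ≤ r) (hkn : k < n)
    (hrank : r < (mproj (Spectra n) P).rank) :
    η * (μ ⟨k, hkn⟩ - μ ⟨0, hn⟩) <
      e * (1 / Real.sqrt rt + 1 / Real.sqrt ((r + 1 - k : ℕ) : ℝ)) := by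
  classical
  have hbn : ∀ i, ‖b i‖ = 1 := fun i => b.orthonormal.1 i
  have hXss : Xs.IsSymm := symm_of_isHerm hXs.2.1
  have hmin : ∀ i, μ ⟨0, hn⟩ ≤ μ i := fun i => hμ (Fin.mk_le_of_le_val (Nat.zero_le _))
  have hqG : ∀ i, qf G (b i) = μ i := by
    intro i
    rw [qf, hb, inner_smul_right, real_inner_self_eq_norm_sq, hbn]; simp
  have htr : ∑ i, qf Xs (b i) = 1 := by rw [← trace_basis]; exact hXs.1
  -- complementarity
  have hc0 : ∀ i : Fin n, rt ≤ (i : ℕ) → qf Xs (b i) = 0 := by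
    have h1 := hopt _ (rank1_mem (b ⟨0, hn⟩) (hbn _))
    rw [mip_sub, mip_rank1, hqG, mip_comm, mip_basis Xs G b μ hb] at h1
    have hnn : ∀ i ∈ Finset.univ, 0 ≤ (μ i - μ ⟨0, hn⟩) * qf Xs (b i) := fun i _ =>
      mul_nonneg (sub_nonneg.2 (hmin i)) (qf_nonneg hXs.2 _)
    have h2 : ∑ i, (μ i - μ ⟨0, hn⟩) * qf Xs (b i) = 0 := by
      refine le_antisymm ?_ (Finset.sum_nonneg hnn)
      simp_rw [sub_mul, Finset.sum_sub_distrib]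
      rw [← Finset.mul_sum, htr]; linarith
    intro i hi
    have h3 := (Finset.sum_eq_zero_iff_of_nonneg hnn).1 h2 i (Finset.mem_univ i)
    rcases mul_eq_zero.1 h3 with h | h
    · exact absurd ((hμrt i).2 (by linarith)) (by omega)
    · exact h
  have hc : ∀ i : Fin n, rt ≤ (i : ℕ) → opT Xs (b i) = 0 := fun i hi =>
    psd_zero hXss (qf_nonneg hXs.2) _ (hc0 i hi)
  obtain ⟨σ, hσ1, F, hF, hσ2⟩ := proj_struct hn P hP
  obtain ⟨hZ, -⟩ := mproj_spec hn P
  set Z := mproj (Spectra n) P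
  set E := P - (Xs - η • G) with hE
  have hPq : ∀ v, qf P v = qf Xs v - η * qf G v + qf E v := by
    intro v; rw [hE, qf_sub, qf_sub, qf_smul]; ring
  have hrtn : rt ≤ n := by omega
  -- lower bound on σ
  have hlow : - η * μ ⟨0, hn⟩ - e / Real.sqrt rt ≤ σ := by
    let u : Fin rt → Vec n := fun i => b (Fin.castLE hrtn i)
    have hu : Orthonormal ℝ u := b.orthonormal.comp _ (Fin.castLE_injective hrtn)
    have hsub : ∀ g : Fin n → ℝ, ∑ i, g (Fin.castLE hrtn i)
        = ∑ i ∈ Finset.univ.filter (fun i : Fin n => (i : ℕ) < rt), g i := by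
      intro g
      rw [← Finset.sum_image (f := g) (g := Fin.castLE hrtn) (s := Finset.univ)
        (fun a _ c _ h => Fin.castLE_injective hrtn h)]
      refine Finset.sum_congr ?_ fun _ _ => rfl
      ext i
      simp only [Finset.mem_image, Finset.mem_univ, true_and, Finset.mem_filter]
      constructor
      · rintro ⟨a, rfl⟩; simp
      · intro h; exact ⟨⟨i, h⟩, by ext; simp⟩
    have h1 : ∑ i, qf Xs (u i) = 1 := by
      rw [hsub (fun i => qf Xs (b i)), ← htr]
      refine Finset.sum_subset (Finset.filter_subset _ _) fun i _ hi => hc0 i ?_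
      simpa using hi
    have h2 : ∑ i, qf G (u i) = rt * μ ⟨0, hn⟩ := by
      have : ∀ i, qf G (u i) = μ ⟨0, hn⟩ := fun i => by
        rw [hqG]; exact (hμrt _).1 (by simp)
      simp [this]
    have h3 : ∑ i, qf Z (u i) ≤ 1 := by
      rw [hsub (fun i => qf Z (b i)), ← hZ.1, trace_basis Z b]
      exact Finset.sum_le_sum_of_subset_of_nonneg (Finset.filter_subset _ _)
        fun i _ _ => qf_nonneg hZ.2 _
    have h4 := (abs_le.1 (qf_sum_le E u hu)).1
    rw [Fintype.card_fin] at h4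
    have h5 : ∑ i, qf P (u i) ≤ ∑ i, (qf Z (u i) + σ) :=
      Finset.sum_le_sum fun i _ => hσ1 _ (hu.1 i)
    simp_rw [hPq, Finset.sum_add_distrib, Finset.sum_sub_distrib] at h5
    rw [← Finset.mul_sum, h1, h2] at h5
    simp only [Finset.sum_const, Finset.card_univ, Fintype.card_fin, nsmul_eq_mul] at h5
    have hs : 0 < Real.sqrt rt := Real.sqrt_pos.2 (by exact_mod_cast hrt1)
    have hs2 : Real.sqrt rt * Real.sqrt rt = rt := Real.mul_self_sqrt (by positivity)
    have h6 : Real.sqrt rt * frob E ≤ Real.sqrt rt * e := by gcongr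
    have h7 : (rt : ℝ) * (e / Real.sqrt rt) = Real.sqrt rt * e := by
      rw [← mul_div_assoc, div_eq_iff hs.ne']; linear_combination (-e) * hs2
    have hrtp : (0 : ℝ) < rt := by exact_mod_cast hrt1
    refine le_of_mul_le_mul_left ?_ hrtp
    rw [mul_sub, h7]
    nlinarith
  -- upper bound on σ
  have hhigh : σ < - η * μ ⟨k, hkn⟩ + e / Real.sqrt ((r + 1 - k : ℕ) : ℝ) := by
    set s := r + 1 - k with hs
    let W : Finset (Vec n) := (Finset.univ.filter fun i : Fin n => (i : ℕ) < k).image b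
    have hW : W.card ≤ k := by
      refine Finset.card_image_le.trans ?_
      rw [Fin.card_filter_val_lt]; omega
    obtain ⟨u, hu, huF⟩ := exists_orthonormal (F ∪ W) s (by
      have := Finset.card_union_le F W
      omega)
    have hub : ∀ j, ∀ i : Fin n, (i : ℕ) < k → ⟪b i, u j⟫ = 0 := fun j i hi =>
      huF j _ (Finset.mem_union_right _ (Finset.mem_image_of_mem _ (by simp [hi])))
    have h1 : ∀ j, qf Xs (u j) = 0 := by
      intro j
      rw [qf, ← b.sum_inner_mul_inner]
      refine Finset.sum_eq_zero fun i _ => ?_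
      rw [← opT_symm hXss]
      rcases lt_or_ge (i : ℕ) k with h | h
      · rw [real_inner_comm, hub j i h]; simp
      · rw [hc i (by omega)]; simp
    have h2 : ∀ j, μ ⟨k, hkn⟩ ≤ qf G (u j) := by
      intro j
      have h := b.sum_sq_norm_inner_right (u j)
      rw [hu.1 j] at h
      have : μ ⟨k, hkn⟩ = ∑ i, μ ⟨k, hkn⟩ * ‖⟪b i, u j⟫‖ ^ 2 := by
        rw [← Finset.mul_sum, h]; simp
      rw [qf_eig hG b μ hb, this]
      refine Finset.sum_le_sum fun i _ => ?_
      rw [Real.norm_eq_abs, sq_abs]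
      rcases lt_or_ge (i : ℕ) k with h | h
      · rw [hub j i h]; simp
      · exact mul_le_mul_of_nonneg_right (hμ (Fin.mk_le_of_le_val h)) (sq_nonneg _)
    have h4 := (abs_le.1 (qf_sum_le E u hu)).2
    rw [Fintype.card_fin] at h4
    have hs1 : 1 ≤ s := by omega
    have h5 : ∑ j : Fin s, σ < ∑ j, qf P (u j) := by
      refine Finset.sum_lt_sum_of_nonempty ⟨⟨0, hs1⟩, Finset.mem_univ _⟩ fun j _ => ?_
      exact hσ2 _ (hu.1 j) fun x hx => huF j x (Finset.mem_union_left _ hx)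
    have h6 : ∑ j, qf P (u j) ≤ ∑ j, (- η * μ ⟨k, hkn⟩ + qf E (u j)) := by
      refine Finset.sum_le_sum fun j _ => ?_
      rw [hPq, h1]
      nlinarith [h2 j]
    rw [Finset.sum_add_distrib] at h6
    simp only [Finset.sum_const, Finset.card_univ, Fintype.card_fin, nsmul_eq_mul] at h5 h6
    have hsp : 0 < Real.sqrt s := Real.sqrt_pos.2 (by exact_mod_cast hs1)
    have hs2 : Real.sqrt s * Real.sqrt s = s := Real.mul_self_sqrt (by positivity)
    have h8 : Real.sqrt s * frob E ≤ Real.sqrt s * e := by gcongr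
    have h7 : (s : ℝ) * (e / Real.sqrt s) = Real.sqrt s * e := by
      rw [← mul_div_assoc, div_eq_iff hsp.ne']; linear_combination (-e) * hs2
    have hsp' : (0 : ℝ) < s := by exact_mod_cast hs1
    refine lt_of_mul_lt_mul_left ?_ hsp'.le
    rw [mul_add, h7]
    linarith
  have : e * (1 / Real.sqrt rt + 1 / Real.sqrt ((r + 1 - k : ℕ) : ℝ)) =
    e / Real.sqrt rt + e / Real.sqrt ((r + 1 - k : ℕ) : ℝ) := by ring
  rw [this]
  linarith

lemma limit_aux (a C : ℝ) (hC : 0 ≤ C) (h : ∀ t : ℝ, 0 < t → t ≤ 1 → -(t * C) ≤ a) : 0 ≤ a := by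
  by_contra ha
  push Not at ha
  have hd : 0 < 1 + C - a := by linarith
  have h1 := h (-a / (1 + C - a)) (div_pos (by linarith) hd) ((div_le_one hd).2 (by linarith))
  have h2 : -a / (1 + C - a) * C < -a := by
    rw [div_mul_eq_mul_div, div_lt_iff₀ hd]
    nlinarith
  linarith

lemma frob_sub_le {n : ℕ} (A B : Mat n) : frob (A - B) ≤ frob A + frob B := by
  rw [← vc_norm, ← vc_norm, ← vc_norm, map_sub]; exact norm_sub_le _ _

lemma frob_add_le {n : ℕ} (A B : Mat n) : frob (A + B) ≤ frob A + frob B := by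
  rw [← vc_norm, ← vc_norm, ← vc_norm, map_add]; exact norm_add_le _ _

lemma frob_smul {n : ℕ} (c : ℝ) (A : Mat n) : frob (c • A) = |c| * frob A := by
  rw [← vc_norm, ← vc_norm, map_smul, norm_smul]; rfl

lemma mip_abs_le {n : ℕ} (A B : Mat n) (hB : B.IsSymm) : |mip A B| ≤ frob A * frob B := by
  rw [← vc_inner A B hB, ← vc_norm, ← vc_norm]; exact abs_real_inner_le_norm _ _

lemma mip_sub_left {n : ℕ} (A B C : Mat n) : mip (A - B) C = mip A C - mip B C := by
  simp [mip, sub_mul]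

lemma pnorm_eq {n m : ℕ} (A : Mat n) (y : Vec m) :
    pnorm A y = ‖(WithLp.toLp 2 (vc A, y) : WithLp 2 (EuclideanSpace ℝ (Fin n × Fin n) × Vec m))‖ := by
  rw [WithLp.prod_norm_eq_of_L2, pnorm]
  simp [vc_norm]

lemma pnorm_sub_smul_le {n m : ℕ} (A B : Mat n) (y w : Vec m) (η : ℝ) (hη : 0 ≤ η) :
    pnorm (A - η • B) (y - η • w) ≤ pnorm A y + η * pnorm B w := by
  rw [pnorm_eq, pnorm_eq, pnorm_eq]
  have : (WithLp.toLp 2 (vc (A - η • B), y - η • w) :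
      WithLp 2 (EuclideanSpace ℝ (Fin n × Fin n) × Vec m)) =
      WithLp.toLp 2 (vc A, y) - η • WithLp.toLp 2 (vc B, w) := by
    rw [map_sub, map_smul]; rfl
  rw [this]
  refine (norm_sub_le _ _).trans ?_
  rw [norm_smul, Real.norm_of_nonneg hη]

lemma proj_step {H : Type*} [NormedAddCommGroup H] [InnerProductSpace ℝ H] (x z s g gs : H) (η : ℝ)
    (hη : 0 ≤ η) (h1 : ⟪x - η • g - z, s - z⟫ ≤ 0) (h2 : 0 ≤ ⟪gs, z - s⟫) :
    ‖z - s‖ ≤ ‖(x - s) - η • (g - gs)‖ := by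
  have h3 : ⟪z - s, z - s⟫ ≤ ⟪(x - s) - η • (g - gs), z - s⟫ := by
    have e1 : (x - s) - η • (g - gs) = (z - s) + (x - η • g - z) + η • gs := by
      rw [smul_sub]; abel
    rw [e1, inner_add_left, inner_add_left, real_inner_smul_left]
    have e2 : ⟪x - η • g - z, z - s⟫ = - ⟪x - η • g - z, s - z⟫ := by
      rw [← inner_neg_right, neg_sub]
    rw [e2]
    have := mul_nonneg hη h2
    linarith
  have h4 := h3.trans (real_inner_le_norm _ _)
  rw [real_inner_self_eq_norm_sq] at h4
  rcases (norm_nonneg (z - s)).eq_or_lt with h | h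
  · rw [← h]; positivity
  · nlinarith

lemma sorted_data {n : ℕ} (hn : 0 < n) (G : Mat n) (hG : G.IsSymm) :
    ∃ (b : OrthonormalBasis (Fin n) ℝ (Vec n)) (μ : Fin n → ℝ), Monotone μ ∧
      (∀ i, opT G (b i) = μ i • b i) ∧ (∀ j (hj : j < n), lam G (n - j) = μ ⟨j, hj⟩) ∧
      1 ≤ multMin G ∧ ∀ i : Fin n, (i : ℕ) < multMin G ↔ μ i = μ ⟨0, hn⟩ := by
  classical
  have hH := isHerm_of_symm hG
  let τ := Tuple.sort hH.eigenvalues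
  let b := hH.eigenvectorBasis.reindex τ.symm
  let μ : Fin n → ℝ := fun i => hH.eigenvalues (τ i)
  have hμ : Monotone μ := Tuple.monotone_sort hH.eigenvalues
  have hb : ∀ i, opT G (b i) = μ i • b i := by
    intro i
    have h := hH.mulVec_eigenvectorBasis (τ i)
    have hbi : b i = hH.eigenvectorBasis (τ i) := by simp [b]
    rw [hbi]
    ext j
    rw [opT_ofLp, h]; simp [μ]
  have hl : ∀ j (hj : j < n), lam G (n - j) = μ ⟨j, hj⟩ := by
    intro j hj
    have h1 : n - j - 1 < n := by omega
    rw [lam, dif_pos h1, dif_pos hH]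
    change hH.eigenvalues (τ _) = hH.eigenvalues (τ _)
    congr 2
    ext
    simp [Fin.val_rev]; omega
  have hl0 : lam G n = μ ⟨0, hn⟩ := hl 0 hn
  have hcard : multMin G = (Finset.univ.filter fun i : Fin n => μ i = μ ⟨0, hn⟩).card := by
    rw [multMin]
    symm
    refine Finset.card_bij (fun i _ => n - (i : ℕ)) ?_ ?_ ?_
    · intro i hi
      simp only [Finset.mem_filter, Finset.mem_univ, true_and, Finset.mem_Icc] at hi ⊢
      refine ⟨⟨by omega, by omega⟩, ?_⟩
      rw [hl i i.2, hl0]; exact hi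
    · intro i _ j _ h
      ext; omega
    · intro k hk
      simp only [Finset.mem_filter, Finset.mem_univ, true_and, Finset.mem_Icc] at hk ⊢
      have hlt : n - k < n := by omega
      refine ⟨⟨n - k, hlt⟩, ?_, by simp only; omega⟩
      rw [← hl (n - k) hlt, ← hl0, show n - (n - k) = k by omega]; exact hk.2
  have hiff : ∀ i : Fin n, (i : ℕ) < multMin G ↔ μ i = μ ⟨0, hn⟩ := by
    have hmin : ∀ i, μ ⟨0, hn⟩ ≤ μ i := fun i => hμ (Fin.mk_le_of_le_val (Nat.zero_le _))
    intro i
    rw [hcard]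
    constructor
    · intro h
      by_contra hne
      have hsub : (Finset.univ.filter fun j : Fin n => μ j = μ ⟨0, hn⟩) ⊆ Finset.Iio i := by
        intro j hj
        simp only [Finset.mem_filter, Finset.mem_univ, true_and, Finset.mem_Iio] at hj ⊢
        by_contra hij
        exact hne (le_antisymm ((hμ (not_lt.1 hij)).trans hj.le) (hmin i))
      have := Finset.card_le_card hsub
      rw [Fin.card_Iio] at this
      omega
    · intro h
      have hsub : Finset.Iic i ⊆ (Finset.univ.filter fun j : Fin n => μ j = μ ⟨0, hn⟩) := by
        intro j hj
        simp only [Finset.mem_filter, Finset.mem_univ, true_and, Finset.mem_Iic] at hj ⊢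
        exact le_antisymm ((hμ hj).trans h.le) (hmin j)
      have := Finset.card_le_card hsub
      rw [Fin.card_Iic] at this
      omega
  refine ⟨b, μ, hμ, hb, hl, ?_, hiff⟩
  exact (hiff ⟨0, hn⟩).2 rfl

lemma rank_bound {n : ℕ} (hn : 0 < n) (G : Mat n) (hG : G.IsSymm)
    (Xs : Mat n) (hXs : Xs ∈ Spectra n) (hopt : ∀ Q ∈ Spectra n, 0 ≤ mip G (Q - Xs))
    (η : ℝ) (hη : 0 ≤ η) (P : Mat n) (hP : P.IsSymm) (rt r : ℕ) (hrt : rt = multMin G)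
    (hr1 : rt ≤ r) (hr2 : r ≤ n - 1)
    (he : frob (P - (Xs - η • G)) ≤ η *
      max (Real.sqrt (rt : ℝ) * (lam G (n - (r - rt + 1)) - lam G n) / 2)
                ((lam G (n - r) - lam G n) / (1 + 1 / Real.sqrt (rt : ℝ)))) :
    (mproj (Spectra n) P).rank ≤ r := by
  by_contra hcon
  push Not at hcon
  obtain ⟨b, μ, hμ, hb, hl, h1, hiff⟩ := sorted_data hn G hG
  rw [← hrt] at h1 hiff
  have hl0 : lam G n = μ ⟨0, hn⟩ := hl 0 hn
  have hk : r - rt + 1 < n := by omega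
  have hrn : r < n := by omega
  rw [hl0, hl _ hk, hl _ hrn] at he
  have hs : 0 < Real.sqrt rt := Real.sqrt_pos.2 (by exact_mod_cast h1)
  have A := core hn b μ hμ G hG hb rt h1 hiff Xs hXs hopt η hη P hP
  have hnn : 0 ≤ (μ ⟨r, hrn⟩ - μ ⟨0, hn⟩) / (1 + 1 / Real.sqrt (rt : ℝ)) :=
    div_nonneg (sub_nonneg.2 (hμ (Fin.mk_le_of_le_val (Nat.zero_le _)))) (by positivity)
  have second : ¬ frob (P - (Xs - η • G)) ≤
      η * ((μ ⟨r, hrn⟩ - μ ⟨0, hn⟩) / (1 + 1 / Real.sqrt (rt : ℝ))) := by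
    intro h
    have := A _ h r r hr1 le_rfl hrn hcon
    have e1 : r + 1 - r = 1 := by omega
    rw [e1] at this
    have e2 : η * ((μ ⟨r, hrn⟩ - μ ⟨0, hn⟩) / (1 + 1 / Real.sqrt (rt : ℝ))) *
        (1 / Real.sqrt rt + 1 / Real.sqrt ((1 : ℕ) : ℝ)) = η * (μ ⟨r, hrn⟩ - μ ⟨0, hn⟩) := by
      have : (1 + 1 / Real.sqrt (rt : ℝ)) ≠ 0 := by positivity
      rw [Nat.cast_one, Real.sqrt_one, div_one, add_comm (1 / Real.sqrt (rt : ℝ)) 1, mul_assoc,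
        div_mul_cancel₀ _ this]
    linarith
  rcases max_choice (Real.sqrt (rt : ℝ) * (μ ⟨r - rt + 1, hk⟩ - μ ⟨0, hn⟩) / 2)
    ((μ ⟨r, hrn⟩ - μ ⟨0, hn⟩) / (1 + 1 / Real.sqrt (rt : ℝ))) with hm | hm
  · by_cases hc : rt ≤ r - rt + 1
    · rw [hm] at he
      have := A _ he r (r - rt + 1) hc (by omega) hk hcon
      have e1 : r + 1 - (r - rt + 1) = rt := by omega
      rw [e1] at this
      have e2 : η * (Real.sqrt (rt : ℝ) * (μ ⟨r - rt + 1, hk⟩ - μ ⟨0, hn⟩) / 2) *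
        (1 / Real.sqrt rt + 1 / Real.sqrt rt) = η * (μ ⟨r - rt + 1, hk⟩ - μ ⟨0, hn⟩) := by
        field_simp; ring
      linarith
    · have h0 : μ ⟨r - rt + 1, hk⟩ = μ ⟨0, hn⟩ := (hiff _).1 (by simp only; omega)
      rw [h0] at he
      simp only [sub_self, mul_zero, zero_div] at he
      rw [max_eq_right hnn] at he
      exact second he
  · rw [hm] at he
    exact second he

theorem stmt_12 {n m : ℕ} (hn : 2 ≤ n)
    (K : Set (Vec m)) (hKne : K.Nonempty) (hKcp : IsCompact K) (hKcv : Convex ℝ K)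
    (f : Mat n → Vec m → ℝ)
    (gX : Mat n → Vec m → Mat n) (gY : Mat n → Vec m → Vec m)
    (hgXs : ∀ X y, (gX X y).IsSymm)
    (hconv : ∀ y ∈ K, ∀ X ∈ SymM n, ∀ X' ∈ SymM n,
      f X' y ≥ f X y + mip (gX X y) (X' - X))
    (hconc : ∀ X ∈ Spectra n, ∀ y y' : Vec m,
      f X y' ≤ f X y + ⟪gY X y, y' - y⟫)
    (Xs : Mat n) (ys : Vec m) (hXsS : Xs ∈ Spectra n) (hysK : ys ∈ K)
    (hsaddle : ∀ X ∈ Spectra n, ∀ y ∈ K, f Xs y ≤ f Xs ys ∧ f Xs ys ≤ f X ys)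
    (rt : ℕ) (hrt : rt = multMin (gX Xs ys))
    (βX βy βXy βyX : ℝ) (hβX0 : 0 ≤ βX) (hβy0 : 0 ≤ βy) (hβXy0 : 0 ≤ βXy) (hβyX0 : 0 ≤ βyX)
    (hLX : ∀ X ∈ Spectra n, ∀ X' ∈ Spectra n, ∀ y ∈ K,
      frob (gX X y - gX X' y) ≤ βX * frob (X - X'))
    (hLy : ∀ X ∈ Spectra n, ∀ y ∈ K, ∀ y' ∈ K,
      ‖gY X y - gY X y'‖ ≤ βy * ‖y - y'‖)
    (hLXy : ∀ X ∈ Spectra n, ∀ y ∈ K, ∀ y' ∈ K,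
      frob (gX X y - gX X y') ≤ βXy * ‖y - y'‖)
    (hLyX : ∀ X ∈ Spectra n, ∀ X' ∈ Spectra n, ∀ y ∈ K,
      ‖gY X y - gY X' y‖ ≤ βyX * frob (X - X'))
    (β : ℝ) (hβ : 0 < β)
    (hLip : ∀ X ∈ Spectra n, ∀ X' ∈ Spectra n, ∀ y ∈ K, ∀ y' ∈ K,
      pnorm (gX X y - gX X' y') (gY X y - gY X' y') ≤ β * pnorm (X - X') (y - y'))
    (η : ℝ) (hη0 : 0 ≤ η) (hηβ : η * β < 1) :
    ∀ r : ℕ, rt ≤ r → r ≤ n - 1 →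
      ∀ X ∈ Spectra n, ∀ y ∈ K,
        pnorm (X - Xs) (y - ys) ≤
          η / (1 + Real.sqrt 2 * η * max βX βXy * (1 + 1 / Real.sqrt (1 - η ^ 2 * β ^ 2))) *
            max (Real.sqrt (rt : ℝ) * (lam (gX Xs ys) (n - (r - rt + 1)) - lam (gX Xs ys) n) / 2)
                ((lam (gX Xs ys) (n - r) - lam (gX Xs ys) n) / (1 + 1 / Real.sqrt (rt : ℝ))) →
        (mproj (Spectra n) (X - η • gX X y)).rank ≤ r ∧
        (mproj (Spectra n)
          (X - η • gX (mproj (Spectra n) (X - η • gX X y)) (vproj K (y + η • gY X y)))).rank ≤ r := by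
  have hn0 : 0 < n := by omega
  have hsym : ∀ A ∈ Spectra n, A.IsSymm := fun A hA => symm_of_isHerm hA.2.1
  -- first-order optimality in X
  have hoptX : ∀ Q ∈ Spectra n, 0 ≤ mip (gX Xs ys) (Q - Xs) := by
    intro Q hQ
    have hQX : (Q - Xs).IsSymm := (hsym Q hQ).sub (hsym Xs hXsS)
    refine limit_aux _ (βX * frob (Q - Xs) * frob (Q - Xs))
      (mul_nonneg (mul_nonneg hβX0 (frob_nonneg _)) (frob_nonneg _)) fun t ht ht1 => ?_
    have hT : Xs + t • (Q - Xs) ∈ Spectra n :=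
      (spectra_convex n).add_smul_sub_mem hXsS hQ ⟨ht.le, ht1⟩
    have h1 := (hsaddle _ hT ys hysK).2
    have h2 := hconv ys hysK _ (hsym _ hT) Xs (hsym _ hXsS)
    have e1 : Xs - (Xs + t • (Q - Xs)) = (-t) • (Q - Xs) := by
      rw [neg_smul]; abel
    rw [e1, mip_smul] at h2
    have h3 : 0 ≤ mip (gX (Xs + t • (Q - Xs)) ys) (Q - Xs) := by
      by_contra hneg
      push Not at hneg
      nlinarith
    have h4 := hLX _ hT Xs hXsS ys hysK
    rw [add_sub_cancel_left, frob_smul, abs_of_pos ht] at h4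
    have h5 := mip_abs_le (gX (Xs + t • (Q - Xs)) ys - gX Xs ys) (Q - Xs) hQX
    rw [mip_sub_left] at h5
    have h6 := (abs_le.1 h5).2
    have h7 := mul_le_mul_of_nonneg_right h4 (frob_nonneg (Q - Xs))
    nlinarith
  -- first-order optimality in y
  have hoptY : ∀ q ∈ K, 0 ≤ ⟪-gY Xs ys, q - ys⟫ := by
    intro q hq
    refine limit_aux _ (βy * ‖q - ys‖ * ‖q - ys‖) (by positivity) fun t ht ht1 => ?_
    have hT : ys + t • (q - ys) ∈ K := hKcv.add_smul_sub_mem hysK hq ⟨ht.le, ht1⟩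
    have h1 := (hsaddle Xs hXsS _ hT).1
    have h2 := hconc Xs hXsS (ys + t • (q - ys)) ys
    have e1 : ys - (ys + t • (q - ys)) = (-t) • (q - ys) := by
      rw [neg_smul]; abel
    rw [e1, inner_smul_right] at h2
    have h3 : ⟪gY Xs (ys + t • (q - ys)), q - ys⟫ ≤ 0 := by
      by_contra hneg
      push Not at hneg
      nlinarith
    have h4 := hLy Xs hXsS _ hT ys hysK
    rw [add_sub_cancel_left, norm_smul, Real.norm_of_nonneg ht.le] at h4
    have h5 := abs_real_inner_le_norm (gY Xs (ys + t • (q - ys)) - gY Xs ys) (q - ys)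
    rw [inner_sub_left] at h5
    have h6 := (abs_le.1 h5).1
    have h7 := mul_le_mul_of_nonneg_right h4 (norm_nonneg (q - ys))
    rw [inner_neg_left]
    nlinarith
  -- gradient bound
  set M := max βX βXy with hM
  have hM0 : 0 ≤ M := hβX0.trans (le_max_left _ _)
  have hgrad : ∀ A ∈ Spectra n, ∀ w ∈ K,
      frob (gX A w - gX Xs ys) ≤ Real.sqrt 2 * M * pnorm (A - Xs) (w - ys) := by
    intro A hA w hw
    have h1 := hLX A hA Xs hXsS w hw
    have h2 := hLXy Xs hXsS w hw ys hysK
    have h3 := frob_add_le (gX A w - gX Xs w) (gX Xs w - gX Xs ys)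
    rw [sub_add_sub_cancel] at h3
    have ha := frob_nonneg (A - Xs)
    have hc := norm_nonneg (w - ys)
    have h4 : βX * frob (A - Xs) ≤ M * frob (A - Xs) :=
      mul_le_mul_of_nonneg_right (le_max_left _ _) ha
    have h5 : βXy * ‖w - ys‖ ≤ M * ‖w - ys‖ :=
      mul_le_mul_of_nonneg_right (le_max_right _ _) hc
    have h6 : frob (A - Xs) + ‖w - ys‖ ≤ Real.sqrt 2 * pnorm (A - Xs) (w - ys) := by
      rw [pnorm, ← Real.sqrt_mul (by norm_num)]
      apply Real.le_sqrt_of_sq_le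
      nlinarith [sq_nonneg (frob (A - Xs) - ‖w - ys‖)]
    have h7 := mul_le_mul_of_nonneg_left h6 hM0
    nlinarith
  intro r hr1 hr2 X hX y hy hD
  set D := pnorm (X - Xs) (y - ys) with hDdef
  have hD0 : 0 ≤ D := Real.sqrt_nonneg _
  have hfD : frob (X - Xs) ≤ D := by
    rw [hDdef, pnorm]
    apply Real.le_sqrt_of_sq_le
    nlinarith [sq_nonneg ‖y - ys‖]
  -- the constant
  have hηβ0 : 0 ≤ η * β := mul_nonneg hη0 hβ.le
  have hpos : 0 < 1 - η ^ 2 * β ^ 2 := by nlinarith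
  have hsq : 0 < Real.sqrt (1 - η ^ 2 * β ^ 2) := Real.sqrt_pos.2 hpos
  have hsq1 : Real.sqrt (1 - η ^ 2 * β ^ 2) ≤ 1 := by
    rw [Real.sqrt_le_left (by norm_num)]
    nlinarith [mul_nonneg hηβ0 hηβ0]
  have hinv : 1 ≤ 1 / Real.sqrt (1 - η ^ 2 * β ^ 2) := (one_le_div hsq).2 hsq1
  set c := 1 + 1 / Real.sqrt (1 - η ^ 2 * β ^ 2) with hc
  have hc2 : 2 ≤ c := by linarith
  have hL0 : 0 ≤ Real.sqrt 2 * η * M := by positivity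
  have hden : 0 < 1 + Real.sqrt 2 * η * M * c := by
    have := mul_nonneg hL0 (by linarith : 0 ≤ c)
    linarith
  rw [div_mul_eq_mul_div, le_div_iff₀ hden] at hD
  -- perturbation bound
  have hpert : ∀ A ∈ Spectra n, ∀ w ∈ K, pnorm (A - Xs) (w - ys) ≤ c * D →
      (mproj (Spectra n) (X - η • gX A w)).rank ≤ r := by
    intro A hA w hw hAw
    refine rank_bound hn0 (gX Xs ys) (hgXs _ _) Xs hXsS hoptX η hη0 _
      ((hsym X hX).sub ((hgXs A w).smul η)) rt r hrt hr1 hr2 (le_trans ?_ hD)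
    have e1 : X - η • gX A w - (Xs - η • gX Xs ys) =
        (X - Xs) - η • (gX A w - gX Xs ys) := by
      rw [smul_sub]; abel
    rw [e1]
    refine (frob_sub_le _ _).trans ?_
    rw [frob_smul, abs_of_nonneg hη0]
    have h1 := mul_le_mul_of_nonneg_left (hgrad A hA w hw) hη0
    have h2 := mul_le_mul_of_nonneg_left hAw hL0
    nlinarith
  refine ⟨hpert X hX y hy (by nlinarith), ?_⟩
  obtain ⟨hZ, hZo⟩ := mproj_spec hn0 (X - η • gX X y)
  obtain ⟨hw, hwo⟩ := vproj_spec hKne hKcp hKcv (y + η • gY X y)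
  refine hpert _ hZ _ hw ?_
  set Z := mproj (Spectra n) (X - η • gX X y)
  set w := vproj K (y + η • gY X y)
  have hZb : frob (Z - Xs) ≤ frob ((X - Xs) - η • (gX X y - gX Xs ys)) := by
    have h := proj_step (vc X) (vc Z) (vc Xs) (vc (gX X y)) (vc (gX Xs ys)) η hη0 ?_ ?_
    · simpa only [← map_sub, ← map_smul, vc_norm] using h
    · have := hZo Xs hXsS
      rw [← vc_inner _ _ ((hsym _ hXsS).sub (hsym _ hZ))] at this
      simpa only [map_sub, map_smul] using this
    · have := hoptX Z hZ
      rw [← vc_inner _ _ ((hsym _ hZ).sub (hsym _ hXsS))] at this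
      simpa only [map_sub, map_smul] using this
  have hwb : ‖w - ys‖ ≤ ‖(y - ys) - η • (-gY X y - -gY Xs ys)‖ := by
    refine proj_step y w ys (-gY X y) (-gY Xs ys) η hη0 ?_ (hoptY w hw)
    have := hwo ys hysK
    rwa [smul_neg, sub_neg_eq_add]
  have e2 : (y - ys) - η • (-gY X y - -gY Xs ys) = (y - ys) - η • (gY Xs ys - gY X y) := by
    congr 2; abel
  rw [e2] at hwb
  have h1 : pnorm (Z - Xs) (w - ys) ≤ pnorm ((X - Xs) - η • (gX X y - gX Xs ys))
      ((y - ys) - η • (gY Xs ys - gY X y)) := by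
    rw [pnorm, pnorm]
    have := frob_nonneg (Z - Xs)
    gcongr
  have h2 := pnorm_sub_smul_le (X - Xs) (gX X y - gX Xs ys) (y - ys) (gY Xs ys - gY X y) η hη0
  have h3 := hLip X hX Xs hXsS y hy ys hysK
  have e3 : pnorm (gX X y - gX Xs ys) (gY Xs ys - gY X y) =
      pnorm (gX X y - gX Xs ys) (gY X y - gY Xs ys) := by
    rw [pnorm, pnorm, norm_sub_rev]
  rw [e3] at h2
  have h4 := mul_le_mul_of_nonneg_left h3 hη0
  have h5 : η * β * D ≤ 1 * D := mul_le_mul_of_nonneg_right hηβ.le hD0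
  have h6 : 2 * D ≤ c * D := mul_le_mul_of_nonneg_right hc2 hD0
  nlinarith
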